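/- Let 1 ≤ k ≤ n and let A ∈ ℝ^{n×k} be a random matrix with i.i.d. standard Gaussian entries. Fix i ∈ [n] and let e_i be the i-th standard basis vector of ℝ^n. Then there is an absolute constant C > 0 such that for every γ ≥ 0, with probability at least 1 − 2·exp(−γ²), sup{ |⟨e_i, v⟩| : v ∈ range(A), ‖v‖₂ = 1 } ≤ C·( √(k/n) + γ/√n ). -/

import Mathlib

open MeasureTheory ProbabilityTheory

/-- The Euclidean (ℓ²) norm of a finite real vector. -/
noncomputable def l2R {n : ℕ} (x : Fin n → ℝ) : ℝ := Real.sqrt (∑ i, x i ^ 2)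

open scoped RealInnerProductSpace

lemma integral_exp_mul_sq_gaussianReal {c : ℝ} (hc : c < 1 / 2) :
    ∫ x, Real.exp (c * x ^ 2) ∂(gaussianReal 0 1) = (√(1 - 2 * c))⁻¹ := by
  rw [integral_gaussianReal_eq_integral_smul (by simp)]
  simp only [gaussianPDFReal, smul_eq_mul, mul_assoc, ← Real.exp_add]
  rw [integral_const_mul]
  have h_exponent (x : ℝ) :
      -(x - 0) ^ 2 / (2 * ((1 : NNReal) : ℝ)) + c * x ^ 2 = -(1 / 2 - c) * x ^ 2 := by
    simp; ring
  simp only [h_exponent, integral_gaussian]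
  rw [← Real.sqrt_inv, ← Real.sqrt_inv, ← Real.sqrt_mul (by positivity)]
  congr 1
  have : 1 / 2 - c ≠ 0 := by linarith
  have : 1 - 2 * c ≠ 0 := by linarith
  field_simp
  simp

section CosineExceeds

variable {E ι : Type*} [NormedAddCommGroup E] [InnerProductSpace ℝ E] [Fintype ι]

/-- The span of the family `a` contains a vector whose cosine with `u` exceeds `t`. -/
def CosineExceeds (t : ℝ) (a : ι → E) (u : E) : Prop :=
  ∃ y : ι → ℝ, t * ‖u‖ * ‖∑ j, y j • a j‖ < |⟪u, ∑ j, y j • a j⟫|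

lemma isOpen_cosineExceeds (t : ℝ) :
    IsOpen {p : PiLp 2 (fun _ : ι => E) × E | CosineExceeds t p.1 p.2} := by
  simp only [CosineExceeds, Set.ofPred_exists]
  exact isOpen_iUnion fun y => isOpen_lt (by fun_prop) (by fun_prop)

lemma cosineExceeds_map_iff (Q : E ≃ₗᵢ[ℝ] E) (t : ℝ) (a : ι → E) (u : E) :
    CosineExceeds t (fun j => Q (a j)) (Q u) ↔ CosineExceeds t a u := by
  simp only [CosineExceeds, ← map_smul, ← map_sum, Q.norm_map, Q.inner_map_map]

lemma cosineExceeds_smul_iff {r : ℝ} (hr : 0 < r) (t : ℝ) (a : ι → E) (u : E) :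
    CosineExceeds t a (r • u) ↔ CosineExceeds t a u := by
  simp only [CosineExceeds, norm_smul, real_inner_smul_left, abs_mul, Real.norm_eq_abs,
    abs_of_pos hr]
  refine exists_congr fun y => ?_
  rw [show t * (r * ‖u‖) * ‖∑ j, y j • a j‖ = r * (t * ‖u‖ * ‖∑ j, y j • a j‖) by ring]
  exact mul_lt_mul_iff_right₀ hr

end CosineExceeds

section StdGaussian

variable {E : Type*} [NormedAddCommGroup E] [InnerProductSpace ℝ E] [FiniteDimensional ℝ E]
  [MeasurableSpace E] [BorelSpace E] {k : ℕ}

lemma mgf_norm_sq_stdGaussian {c : ℝ} (hc : c < 1 / 2) :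
    mgf (fun x : E => ‖x‖ ^ 2) (stdGaussian E) c
      = (√(1 - 2 * c))⁻¹ ^ Module.finrank ℝ E := by
  set b := stdOrthonormalBasis ℝ E
  rw [mgf, stdGaussian_eq_map_pi_orthonormalBasis b,
    integral_map (Measurable.aemeasurable (by fun_prop))
      (Measurable.aestronglyMeasurable (by fun_prop))]
  have h_norm (x : Fin (Module.finrank ℝ E) → ℝ) : ‖∑ i, x i • b i‖ ^ 2 = ∑ i, x i ^ 2 := by
    rw [← b.sum_sq_inner_right]
    simp [b.orthonormal.inner_right_fintype]
  simp only [h_norm, Finset.mul_sum, Real.exp_sum]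
  rw [integral_fintype_prod_eq_prod (fun _ x => Real.exp (c * x ^ 2))]
  simp [integral_exp_mul_sq_gaussianReal hc]

lemma integrable_exp_mul_norm_sq_stdGaussian {c : ℝ} (hc : c < 1 / 2) :
    Integrable (fun x : E => Real.exp (c * ‖x‖ ^ 2)) (stdGaussian E) := by
  refine .of_integral_ne_zero ?_
  have h := mgf_norm_sq_stdGaussian (E := E) hc
  rw [mgf] at h
  have : 0 < 1 - 2 * c := by linarith
  rw [h]
  positivity

lemma stdGaussian_norm_sq_ge_le (hk : Module.finrank ℝ E ≤ k) (s : ℝ) :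
    (stdGaussian E).real {x | 4 * (k + s) ≤ ‖x‖ ^ 2} ≤ Real.exp (-s) := by
  refine (measure_ge_le_exp_mul_mgf (t := 1 / 4) _ (by norm_num)
    (integrable_exp_mul_norm_sq_stdGaussian (by norm_num))).trans ?_
  rw [mgf_norm_sq_stdGaussian (by norm_num)]
  have h_base : (√(1 - 2 * (1 / 4)))⁻¹ ≤ Real.exp 1 := by
    rw [← Real.sqrt_inv]
    refine (Real.sqrt_le_iff.2 ⟨by norm_num, ?_⟩ : _ ≤ (2 : ℝ)).trans ?_
    · norm_num
    · linarith [Real.add_one_le_exp 1]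
  have h_one : 1 ≤ (√(1 - 2 * (1 / 4)))⁻¹ := by
    rw [← Real.sqrt_inv]
    exact Real.one_le_sqrt.2 (by norm_num)
  calc Real.exp (-(1 / 4) * (4 * (k + s))) * (√(1 - 2 * (1 / 4)))⁻¹ ^ Module.finrank ℝ E
      ≤ Real.exp (-(1 / 4) * (4 * (k + s))) * Real.exp 1 ^ k := by
        gcongr
        exact (pow_le_pow_right₀ h_one hk).trans (by gcongr)
    _ = Real.exp (-s) := by
        rw [← Real.exp_nat_mul, ← Real.exp_add]
        ring_nf

lemma stdGaussian_norm_sq_le_le :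
    (stdGaussian E).real {x | ‖x‖ ^ 2 ≤ Module.finrank ℝ E / 4}
      ≤ Real.exp (-(Module.finrank ℝ E / 4)) := by
  set d := Module.finrank ℝ E with hd
  refine (measure_le_le_exp_mul_mgf (t := -1) _ (by norm_num)
    (integrable_exp_mul_norm_sq_stdGaussian (by norm_num))).trans ?_
  rw [mgf_norm_sq_stdGaussian (by norm_num), ← hd]
  have h_base : (√(1 - 2 * (-1)))⁻¹ ≤ Real.exp (-(1 / 2)) := by
    rw [Real.exp_neg, one_div, ← one_div 2, Real.exp_half]
    gcongr
    linarith [Real.exp_one_lt_d9]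
  calc Real.exp (-(-1) * (d / 4)) * (√(1 - 2 * (-1)))⁻¹ ^ d
      ≤ Real.exp (-(-1) * (d / 4)) * Real.exp (-(1 / 2)) ^ d := by gcongr
    _ = Real.exp (-(d / 4)) := by
        rw [← Real.exp_nat_mul, ← Real.exp_add]
        ring_nf

lemma stdGaussian_map_orthogonalProjectionOnto (W : Submodule ℝ E) :
    (stdGaussian E).map W.orthogonalProjectionOnto = stdGaussian W := by
  apply Measure.ext_of_charFun
  ext t
  rw [charFun_apply, integral_map (by fun_prop) (Measurable.aestronglyMeasurable (by fun_prop))]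
  simp_rw [Submodule.inner_orthogonalProjectionOnto_eq_of_mem_right]
  rw [← charFun_apply, charFun_stdGaussian, charFun_stdGaussian]
  simp

lemma stdGaussian_cosineExceeds_eq (t : ℝ) {u e : E} (hu : u ≠ 0) (he : ‖e‖ = 1) :
    stdGaussian (PiLp 2 (fun _ : Fin k => E)) {a | CosineExceeds t a u}
      = stdGaussian (PiLp 2 (fun _ : Fin k => E)) {a | CosineExceeds t a e} := by
  set Q : E ≃ₗᵢ[ℝ] E := (Submodule.span ℝ {u - ‖u‖ • e})ᗮ.reflection
  have hQ : Q u = ‖u‖ • e := Submodule.reflection_sub (by simp [norm_smul, he])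
  have h_meas : MeasurableSet {a : PiLp 2 (fun _ : Fin k => E) | CosineExceeds t a e} :=
    ((isOpen_cosineExceeds t).preimage (by fun_prop :
      Continuous fun a : PiLp 2 (fun _ : Fin k => E) => (a, e))).measurableSet
  rw [← stdGaussian_map (LinearIsometryEquiv.piLpCongrRight 2 (fun _ : Fin k => Q)),
    Measure.map_apply (LinearIsometryEquiv.continuous _).measurable h_meas,
    stdGaussian_map (LinearIsometryEquiv.piLpCongrRight 2 (fun _ : Fin k => Q))]
  congr 1
  ext a
  rw [Set.mem_ofPred_eq, ← cosineExceeds_map_iff Q, hQ,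
    cosineExceeds_smul_iff (norm_pos_iff.2 hu)]
  rfl

lemma stdGaussian_cosineExceeds_le {t γ : ℝ} (ht : 0 ≤ t) (hγ : γ ^ 2 ≤ Module.finrank ℝ E / 4)
    (htγ : 16 * (k + γ ^ 2) ≤ t ^ 2 * Module.finrank ℝ E) (a : Fin k → E) :
    stdGaussian E {u | u = 0 ∨ CosineExceeds t a u}
      ≤ ENNReal.ofReal (2 * Real.exp (-γ ^ 2)) := by
  set W := (Fintype.linearCombination ℝ a).range
  have hW : Module.finrank ℝ W ≤ k := by
    simpa using LinearMap.finrank_range_le (Fintype.linearCombination ℝ a)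
  have h_sub : {u | u = 0 ∨ CosineExceeds t a u} ⊆
      {u | ‖u‖ ^ 2 ≤ Module.finrank ℝ E / 4} ∪
        W.orthogonalProjectionOnto ⁻¹' {w | 4 * (k + γ ^ 2) ≤ ‖w‖ ^ 2} := by
    rintro u (rfl | ⟨y, hy⟩)
    · left
      simp
      positivity
    · by_contra h
      simp only [Set.mem_union, Set.mem_ofPred_eq, Set.mem_preimage, not_or, not_le] at h
      have h_le : ‖W.orthogonalProjectionOnto u‖ ≤ t * ‖u‖ := by
        refine le_of_sq_le_sq ?_ (by positivity)
        nlinarith [mul_le_mul_of_nonneg_left h.1.le (sq_nonneg t)]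
      have h_mem : ∑ j, y j • a j ∈ W := ⟨y, by simp [Fintype.linearCombination_apply]⟩
      refine hy.not_ge ?_
      rw [← Submodule.inner_orthogonalProjectionOnto_eq_of_mem_right ⟨_, h_mem⟩ u]
      refine (abs_real_inner_le_norm _ _).trans ?_
      simp only [Submodule.coe_norm] at h_le ⊢
      gcongr
  have h_upper := stdGaussian_norm_sq_ge_le hW (γ ^ 2)
  rw [← stdGaussian_map_orthogonalProjectionOnto, map_measureReal_apply (by fun_prop)
    (measurableSet_le (by fun_prop) (by fun_prop))] at h_upper
  have h_lower : (stdGaussian E).real {x | ‖x‖ ^ 2 ≤ Module.finrank ℝ E / 4}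
      ≤ Real.exp (-γ ^ 2) :=
    stdGaussian_norm_sq_le_le.trans (Real.exp_le_exp.2 (neg_le_neg hγ))
  rw [← ofReal_measureReal]
  refine ENNReal.ofReal_le_ofReal ((measureReal_mono h_sub).trans
    ((measureReal_union_le _ _).trans ?_))
  linarith

/-- Tail bound for the cosine between a fixed unit vector and a random Gaussian subspace:
by rotation invariance the fixed vector may be replaced by an independent Gaussian one. -/
lemma stdGaussian_pi_cosineExceeds_le {t γ : ℝ} (ht : 0 ≤ t)
    (hγ : γ ^ 2 ≤ Module.finrank ℝ E / 4)
    (htγ : 16 * (k + γ ^ 2) ≤ t ^ 2 * Module.finrank ℝ E) {e : E} (he : ‖e‖ = 1) :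
    stdGaussian (PiLp 2 (fun _ : Fin k => E)) {a | CosineExceeds t a e}
      ≤ ENNReal.ofReal (2 * Real.exp (-γ ^ 2)) := by
  set H := PiLp 2 (fun _ : Fin k => E)
  set T : Set (H × E) := {p | p.2 = 0 ∨ CosineExceeds t p.1 p.2}
  have hT : MeasurableSet T :=
    (measurable_snd (measurableSet_singleton 0)).union (isOpen_cosineExceeds t).measurableSet
  calc stdGaussian H {a | CosineExceeds t a e}
      = ∫⁻ _, stdGaussian H {a | CosineExceeds t a e} ∂(stdGaussian E) := by simp
    _ ≤ ∫⁻ u, stdGaussian H ((fun a => (a, u)) ⁻¹' T) ∂(stdGaussian E) := by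
        refine lintegral_mono fun u => ?_
        by_cases hu : u = 0
        · exact measure_mono fun a _ => Or.inl hu
        · rw [← stdGaussian_cosineExceeds_eq t hu he]
          exact measure_mono fun a ha => Or.inr ha
    _ = ∫⁻ a, stdGaussian E (Prod.mk a ⁻¹' T) ∂(stdGaussian H) := by
        rw [← Measure.prod_apply_symm hT, Measure.prod_apply hT]
    _ ≤ ∫⁻ _, ENNReal.ofReal (2 * Real.exp (-γ ^ 2)) ∂(stdGaussian H) :=
        lintegral_mono fun a => stdGaussian_cosineExceeds_le ht hγ htγ a
    _ = ENNReal.ofReal (2 * Real.exp (-γ ^ 2)) := by simp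

end StdGaussian

/-- The isometry sending a matrix with its Frobenius norm to its family of columns. -/
noncomputable def columnsIsometry (n k : ℕ) :
    EuclideanSpace ℝ (Fin n × Fin k) ≃ₗᵢ[ℝ] PiLp 2 (fun _ : Fin k => EuclideanSpace ℝ (Fin n)) where
  toFun x := WithLp.toLp 2 fun j => WithLp.toLp 2 fun i => x (i, j)
  invFun a := WithLp.toLp 2 fun p => a p.2 p.1
  map_add' _ _ := rfl
  map_smul' _ _ := rfl
  left_inv _ := rfl
  right_inv _ := rfl
  norm_map' x := by
    rw [← sq_eq_sq₀ (norm_nonneg _) (norm_nonneg _), PiLp.norm_sq_eq_of_L2]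
    simp only [EuclideanSpace.real_norm_sq_eq]
    rw [Fintype.sum_prod_type_right]
    rfl

lemma columnsIsometry_apply {n k : ℕ} (x : EuclideanSpace ℝ (Fin n × Fin k)) (i : Fin n)
    (j : Fin k) : columnsIsometry n k x j i = x (i, j) := rfl

lemma l2R_eq_norm {n : ℕ} (v : Fin n → ℝ) : l2R v = ‖WithLp.toLp 2 v‖ := by
  simp [l2R, EuclideanSpace.norm_eq]

lemma abs_apply_le_l2R {n : ℕ} (v : Fin n → ℝ) (i : Fin n) : |v i| ≤ l2R v := by
  rw [l2R_eq_norm]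
  exact PiLp.norm_apply_le (WithLp.toLp 2 v) i

theorem gaussian_column_space_coordinate_bound :
    ∃ C : ℝ, 0 < C ∧
      ∀ (n k : ℕ), 1 ≤ k → k ≤ n →
        ∀ (Ω : Type) [MeasurableSpace Ω] (μ : Measure Ω), IsProbabilityMeasure μ →
          ∀ (A : Ω → Matrix (Fin n) (Fin k) ℝ),
            Measurable (fun ω => fun p : Fin n × Fin k => A ω p.1 p.2) →
            Measure.map (fun ω => fun p : Fin n × Fin k => A ω p.1 p.2) μ =
              Measure.pi (fun _ : Fin n × Fin k => gaussianReal 0 1) →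
            ∀ i : Fin n, ∀ γ : ℝ, 0 ≤ γ →
              ENNReal.ofReal (1 - 2 * Real.exp (-γ ^ 2)) ≤
                μ {ω | ∀ v : Fin n → ℝ, (∃ y, v = (A ω).mulVec y) → l2R v = 1 →
                  |v i| ≤ C * (Real.sqrt ((k : ℝ) / n) + γ / Real.sqrt n)} := by
  refine ⟨4, by norm_num, fun n k hk hkn Ω _ μ hμ A hA hA_law i γ hγ => ?_⟩
  have hn : (0 : ℝ) < n := by exact_mod_cast hk.trans hkn
  set t : ℝ := 4 * (√((k : ℝ) / n) + γ / √n) with ht_def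
  have ht : 0 ≤ t := by positivity
  rcases lt_or_ge ((n : ℝ) / 4) (γ ^ 2) with h_large | h_small
  · have ht_one : 1 ≤ t := by
      have : 1 ≤ 4 * (γ / √n) := by
        rw [← mul_div_assoc, le_div_iff₀ (by positivity), one_mul]
        exact Real.sqrt_le_iff.2 ⟨by positivity, by nlinarith⟩
      have : 0 ≤ √((k : ℝ) / n) := by positivity
      linarith
    calc ENNReal.ofReal (1 - 2 * Real.exp (-γ ^ 2)) ≤ 1 := by
          rw [ENNReal.ofReal_le_one]
          linarith [Real.exp_pos (-γ ^ 2)]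
      _ = μ Set.univ := measure_univ.symm
      _ ≤ _ := by
          refine measure_mono fun ω _ => ?_
          intro v _ hv
          exact (abs_apply_le_l2R v i).trans (hv.trans_le ht_one)
  have htγ : 16 * (k + γ ^ 2) ≤ t ^ 2 * n := by
    have h_sq : t ^ 2 * n = 16 * (√k + γ) ^ 2 := by
      rw [ht_def, Real.sqrt_div (by positivity)]
      field_simp
      rw [Real.sq_sqrt hn.le]
      ring
    rw [h_sq]
    nlinarith [Real.sq_sqrt (Nat.cast_nonneg (α := ℝ) k), mul_nonneg (Real.sqrt_nonneg k) hγ]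
  set φ : Ω → PiLp 2 (fun _ : Fin k => EuclideanSpace ℝ (Fin n)) :=
    fun ω => columnsIsometry n k (WithLp.toLp 2 fun p => A ω p.1 p.2)
  have hφ : Measurable φ := (columnsIsometry n k).continuous.measurable.comp
    ((WithLp.measurable_toLp _ _).comp hA)
  have hφ_law : μ.map φ = stdGaussian (PiLp 2 (fun _ : Fin k => EuclideanSpace ℝ (Fin n))) := by
    rw [← stdGaussian_map (columnsIsometry n k), ← map_pi_eq_stdGaussian, ← hA_law,
      Measure.map_map (WithLp.measurable_toLp _ _) hA,
      Measure.map_map (columnsIsometry n k).continuous.measurable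
        ((WithLp.measurable_toLp _ _).comp hA)]
    rfl
  set e : EuclideanSpace ℝ (Fin n) := EuclideanSpace.single i 1
  set B : Set (PiLp 2 (fun _ : Fin k => EuclideanSpace ℝ (Fin n))) := {a | CosineExceeds t a e}
  have hB : MeasurableSet B :=
    ((isOpen_cosineExceeds t).preimage (by fun_prop :
      Continuous fun a : PiLp 2 (fun _ : Fin k => EuclideanSpace ℝ (Fin n)) => (a, e))).measurableSet
  have hB_le : stdGaussian _ B ≤ ENNReal.ofReal (2 * Real.exp (-γ ^ 2)) :=
    stdGaussian_pi_cosineExceeds_le ht (by simpa using h_small) (by simpa using htγ)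
      (by simp [e])
  calc ENNReal.ofReal (1 - 2 * Real.exp (-γ ^ 2))
      ≤ 1 - stdGaussian _ B := by
        rw [ENNReal.ofReal_sub _ (by positivity), ENNReal.ofReal_one]
        exact tsub_le_tsub_left hB_le 1
    _ = μ (φ ⁻¹' Bᶜ) := by
        rw [← Measure.map_apply hφ hB.compl, hφ_law, prob_compl_eq_one_sub hB]
    _ ≤ _ := by
        refine measure_mono fun ω hω v hv hv_norm => ?_
        obtain ⟨y, rfl⟩ := hv
        have h_sum : ∑ j, y j • φ ω j = WithLp.toLp 2 ((A ω).mulVec y) := by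
          ext l
          simp [φ, columnsIsometry_apply, Matrix.mulVec, dotProduct, mul_comm]
        have h_le := not_lt.1 fun h => hω ⟨y, h⟩
        rw [h_sum, ← l2R_eq_norm ((A ω).mulVec y), hv_norm] at h_le
        simpa [e, EuclideanSpace.inner_single_left] using h_le
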